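/- arXiv:math/0510011 — 3 statements merged into one kernel-verified Lean document; each statement's English description precedes it below -/
import Mathlib

section
/- Let R be a commutative ring and n ≥ 3. Let M be the n×n matrix over R with rows and columns indexed by 0,…,n−1, with entries M_{i,i} = B_i for 0 ≤ i ≤ n−1, M_{i,i+1} = M_{i+1,i} = A_i for 0 ≤ i ≤ n−2, M_{0,n−1} = M_{n−1,0} = A_{n−1}, and all other entries 0. Then det M = B_0·Q_{n−1}(B_1,…,B_{n−1}; A_1,…,A_{n−2}) − A_0²·Q_{n−2}(B_2,…,B_{n−1}; A_2,…,A_{n−2}) − A_{n−1}²·Q_{n−2}(B_1,…,B_{n−2}; A_1,…,A_{n−3}) + 2·(−1)^{n−1}·A_0·A_1·⋯·A_{n−1}. -/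
/-- `Qtri n B A` is the determinant of the `n × n` symmetric tridiagonal matrix with
diagonal entries `B 1, …, B n` and off-diagonal entries `A 1, …, A (n-1)`
(so `Qtri 0 B A = 1` by convention). -/
def Qtri {R : Type} [CommRing R] (n : ℕ) (B A : ℕ → R) : R :=
  Matrix.det (Matrix.of fun i j : Fin n =>
    if (i : ℕ) = (j : ℕ) then B ((i : ℕ) + 1)
    else if (i : ℕ) + 1 = (j : ℕ) then A ((i : ℕ) + 1)
    else if (j : ℕ) + 1 = (i : ℕ) then A ((j : ℕ) + 1)
    else 0)

theorem wheel_sum3 {R : Type} [CommRing R] (m : ℕ) (f : Fin (m + 3) → R)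
    (h : ∀ i : Fin (m + 3), (i : ℕ) ≠ 0 → (i : ℕ) ≠ 1 → (i : ℕ) ≠ m + 2 → f i = 0) :
    ∑ i, f i = f 0 + f 1 + f (Fin.last (m + 2)) := by
  rw [Fin.sum_univ_succ, Fin.sum_univ_succ, Fin.sum_univ_castSucc, Finset.sum_eq_zero]
  · simp [add_assoc]
  · intro i _
    apply h
    · simp
    · simp
    · have := i.2
      simp
      omega

theorem wheel_sum2 {R : Type} [CommRing R] (m : ℕ) (f : Fin (m + 2) → R)
    (h : ∀ i : Fin (m + 2), (i : ℕ) ≠ 0 → (i : ℕ) ≠ m + 1 → f i = 0) :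
    ∑ i, f i = f 0 + f (Fin.last (m + 1)) := by
  rw [Fin.sum_univ_succ, Fin.sum_univ_castSucc, Finset.sum_eq_zero]
  · simp
  · intro i _
    apply h
    · simp
    · have := i.2
      simp
      omega

theorem wheel_sa (n : ℕ) (p : Fin (n + 1)) (i : Fin n) :
    ((p.succAbove i : Fin (n + 1)) : ℕ) = if (i : ℕ) < (p : ℕ) then (i : ℕ) else (i : ℕ) + 1 := by
  unfold Fin.succAbove
  simp only [Fin.lt_def, Fin.val_castSucc]
  split_ifs <;> simp

theorem wheel_expand {R : Type} [CommRing R] (m : ℕ) (w : ℕ → ℕ → R)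
    (hr : ∀ j, j ≠ 0 → j ≠ 1 → j ≠ m + 2 → w 0 j = 0)
    (hc : ∀ j, j ≠ 0 → j ≠ 1 → j ≠ m + 2 → w j 0 = 0) :
    Matrix.det (Matrix.of fun i j : Fin (m + 3) => w i j) =
      w 0 0 * Matrix.det (Matrix.of fun i j : Fin (m + 2) => w (i + 1) (j + 1))
      - w 0 1 * (w 1 0 * Matrix.det (Matrix.of fun i j : Fin (m + 1) => w (i + 2) (j + 2))
        + (-1) ^ (m + 1) * w (m + 2) 0 *
          Matrix.det (Matrix.of fun i j : Fin (m + 1) => w (i + 1) (j + 2)))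
      + (-1) ^ (m + 2) * w 0 (m + 2) *
        (w 1 0 * Matrix.det (Matrix.of fun i j : Fin (m + 1) => w (i + 2) (j + 1))
        + (-1) ^ (m + 1) * w (m + 2) 0 *
          Matrix.det (Matrix.of fun i j : Fin (m + 1) => w (i + 1) (j + 1))) := by
  rw [Matrix.det_succ_row_zero, wheel_sum3]
  · have e1 : ((Matrix.of fun i j : Fin (m + 3) => w i j).submatrix Fin.succ
        (Fin.succAbove 1)).det =
        w 1 0 * Matrix.det (Matrix.of fun i j : Fin (m + 1) => w (i + 2) (j + 2))
        + (-1) ^ (m + 1) * w (m + 2) 0 *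
          Matrix.det (Matrix.of fun i j : Fin (m + 1) => w (i + 1) (j + 2)) := by
      rw [Matrix.det_succ_column_zero, wheel_sum2]
      · refine congrArg₂ (· + ·) ?_ ?_
        · refine congrArg₂ (· * ·) ?_ ?_
          · simp
          · refine congrArg Matrix.det (Matrix.ext fun i j => ?_); simp [wheel_sa]
        · refine congrArg₂ (· * ·) ?_ ?_
          · simp
          · rw [Fin.succAbove_last]; refine congrArg Matrix.det (Matrix.ext fun i j => ?_); simp [wheel_sa]
      · intro i h0 h1
        have := hc (i + 1) (by omega) (by omega) (by omega)
        simp [this]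
    have e2 : ((Matrix.of fun i j : Fin (m + 3) => w i j).submatrix Fin.succ
        (Fin.succAbove (Fin.last (m + 2)))).det =
        w 1 0 * Matrix.det (Matrix.of fun i j : Fin (m + 1) => w (i + 2) (j + 1))
        + (-1) ^ (m + 1) * w (m + 2) 0 *
          Matrix.det (Matrix.of fun i j : Fin (m + 1) => w (i + 1) (j + 1)) := by
      rw [Matrix.det_succ_column_zero, wheel_sum2]
      · refine congrArg₂ (· + ·) ?_ ?_
        · refine congrArg₂ (· * ·) ?_ ?_
          · simp
          · refine congrArg Matrix.det (Matrix.ext fun i j => ?_); simp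
        · refine congrArg₂ (· * ·) ?_ ?_
          · simp
          · rw [Fin.succAbove_last]; refine congrArg Matrix.det (Matrix.ext fun i j => ?_); simp
      · intro i h0 h1
        have := hc (i + 1) (by omega) (by omega) (by omega)
        simp [this]
    have e0 : ((Matrix.of fun i j : Fin (m + 3) => w i j).submatrix Fin.succ
        (Fin.succAbove 0)).det =
        Matrix.det (Matrix.of fun i j : Fin (m + 2) => w (i + 1) (j + 1)) := by
      refine congrArg Matrix.det (Matrix.ext fun i j => ?_); simp
    rw [e0, e1, e2]
    simp
    ring
  · intro i h0 h1 h2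
    simp [hr i h0 h1 h2]

/-- **Expansion of the wheel matrix determinant** (eqs. (11.7)–(11.10) of the paper).
For `n ≥ 3`, let `M` be the `n × n` matrix with diagonal `B_0,…,B_{n−1}`,
off-diagonal entries `M_{i,i+1} = M_{i+1,i} = A_i`, corner entries
`M_{0,n−1} = M_{n−1,0} = A_{n−1}`, and all other entries `0`.  Then
`det M = B_0·Q_{n−1}(B_1,…,B_{n−1}; A_1,…,A_{n−2})
        − A_0²·Q_{n−2}(B_2,…,B_{n−1}; A_2,…,A_{n−2})
        − A_{n−1}²·Q_{n−2}(B_1,…,B_{n−2}; A_1,…,A_{n−3})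
        + 2·(−1)^{n−1}·A_0·A_1·⋯·A_{n−1}`. -/
theorem wheel_matrix_det {R : Type} [CommRing R] (n : ℕ) (hn : 3 ≤ n) (B A : ℕ → R) :
    Matrix.det (Matrix.of fun i j : Fin n =>
        if (i : ℕ) = (j : ℕ) then B (i : ℕ)
        else if (i : ℕ) + 1 = (j : ℕ) then A (i : ℕ)
        else if (j : ℕ) + 1 = (i : ℕ) then A (j : ℕ)
        else if (i : ℕ) = 0 ∧ (j : ℕ) = n - 1 then A (n - 1)
        else if (j : ℕ) = 0 ∧ (i : ℕ) = n - 1 then A (n - 1)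
        else 0)
      = B 0 * Qtri (n - 1) B A
        - (A 0) ^ 2 * Qtri (n - 2) (fun k => B (k + 1)) (fun k => A (k + 1))
        - (A (n - 1)) ^ 2 * Qtri (n - 2) B A
        + 2 * (-1 : R) ^ (n - 1) * ∏ i ∈ Finset.range n, A i := by
  obtain ⟨m, rfl⟩ : ∃ m, n = m + 3 := ⟨n - 3, by omega⟩
  simp only [show m + 3 - 1 = m + 2 by omega, show m + 3 - 2 = m + 1 by omega]
  obtain ⟨w, hw⟩ : ∃ w : ℕ → ℕ → R, ∀ i j, w i j =
        if i = j then B i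
        else if i + 1 = j then A i
        else if j + 1 = i then A j
        else if i = 0 ∧ j = m + 2 then A (m + 2)
        else if j = 0 ∧ i = m + 2 then A (m + 2)
        else 0 := ⟨_, fun _ _ => rfl⟩
  have key := wheel_expand m w (by intro j h0 h1 h2; grind) (by intro j h0 h1 h2; grind)
  have hprod : ∏ i ∈ Finset.range (m + 3), A i
      = A 0 * (∏ i : Fin (m + 1), A ((i : ℕ) + 1)) * A (m + 2) := by
    rw [Finset.prod_range_succ, Finset.prod_range_succ', Fin.prod_univ_eq_prod_range
      (fun i => A (i + 1))]
    ring
  have d1 : Matrix.det (Matrix.of fun i j : Fin (m + 2) => w (i + 1) (j + 1))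
      = Qtri (m + 2) B A := by
    refine congrArg Matrix.det (Matrix.ext fun i j => ?_)
    simp [hw]
  have d2 : Matrix.det (Matrix.of fun i j : Fin (m + 1) => w (i + 2) (j + 2))
      = Qtri (m + 1) (fun k => B (k + 1)) (fun k => A (k + 1)) := by
    refine congrArg Matrix.det (Matrix.ext fun i j => ?_)
    simp only [hw, Matrix.of_apply]
    grind
  have d3 : Matrix.det (Matrix.of fun i j : Fin (m + 1) => w (i + 1) (j + 1))
      = Qtri (m + 1) B A := by
    refine congrArg Matrix.det (Matrix.ext fun i j => ?_)
    simp [hw]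
  have d4 : Matrix.det (Matrix.of fun i j : Fin (m + 1) => w (i + 1) (j + 2))
      = ∏ i : Fin (m + 1), A ((i : ℕ) + 1) := by
    rw [Matrix.det_of_isLowerTriangular]
    · refine Finset.prod_congr rfl fun i _ => ?_
      simp [hw]
    · intro i j hij
      have hij' : (i : ℕ) < j := hij
      simp only [hw, Matrix.of_apply]
      grind
  have d5 : Matrix.det (Matrix.of fun i j : Fin (m + 1) => w (i + 2) (j + 1))
      = ∏ i : Fin (m + 1), A ((i : ℕ) + 1) := by
    rw [Matrix.det_of_isUpperTriangular]
    · refine Finset.prod_congr rfl fun i _ => ?_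
      simp [hw]
    · intro i j hij
      have hij' : (j : ℕ) < i := hij
      simp only [hw, Matrix.of_apply]
      grind
  have w1 : w 0 0 = B 0 := by simp [hw]
  have w2 : w 0 1 = A 0 := by simp [hw]
  have w3 : w 1 0 = A 0 := by simp [hw]
  have w4 : w 0 (m + 2) = A (m + 2) := by simp [hw]
  have w5 : w (m + 2) 0 = A (m + 2) := by simp [hw]
  rw [d1, d2, d3, d4, d5, w1, w2, w3, w4, w5] at key
  simp only [← hw]
  rw [key, hprod]
  have hs : ((-1 : R) ^ m) * (-1) ^ m = 1 := by rw [← mul_pow]; simp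
  simp only [pow_add]
  linear_combination (-(A (m + 2)) ^ 2 * Qtri (m + 1) B A) * hs
end

section
/- Let R be an integral domain and n ≥ 2. For elements B_1,…,B_n, A_1,…,A_{n−1} of R, the two equations Q_n(B_1,…,B_n; A_1,…,A_{n−1}) = 0 and Q_{n−1}(B_2,…,B_n; A_2,…,A_{n−1}) = 0 hold simultaneously if and only if there exists an index i with 1 ≤ i ≤ n−1 such that A_i = 0 and Q_{n−i}(B_{i+1},…,B_n; A_{i+1},…,A_{n−1}) = 0. -/
theorem Qtri_rec {R : Type} [CommRing R] (n : ℕ) (B A : ℕ → R) :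
    Qtri (n + 2) B A = B 1 * Qtri (n + 1) (fun k => B (k + 1)) (fun k => A (k + 1))
      - A 1 ^ 2 * Qtri n (fun k => B (k + 2)) (fun k => A (k + 2)) := by
  unfold Qtri
  rw [Matrix.det_succ_row_zero, Fin.sum_univ_succ, Fin.sum_univ_succ, Finset.sum_eq_zero]
  · have h1 : ∀ M : Matrix (Fin (n + 1)) (Fin (n + 1)) R, (∀ i : Fin n, M i.succ 0 = 0) →
        M.det = M 0 0 * (M.submatrix Fin.succ Fin.succ).det := by
      intro M hM
      rw [Matrix.det_succ_column_zero, Fin.sum_univ_succ, Finset.sum_eq_zero]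
      · simp
      · intro i _
        simp [hM]
    have e1 : ∀ M N : Matrix (Fin (n + 1)) (Fin (n + 1)) R, (∀ i j, M i j = N i j) →
        M.det = N.det := fun M N h => congrArg _ (Matrix.ext h)
    have e0 : ∀ M N : Matrix (Fin n) (Fin n) R, (∀ i j, M i j = N i j) →
        M.det = N.det := fun M N h => congrArg _ (Matrix.ext h)
    rw [h1 (Matrix.submatrix _ Fin.succ (Fin.succAbove (Fin.succ 0)))]
    · rw [e0 (Matrix.submatrix (Matrix.submatrix _ _ _) _ _) (Matrix.of fun i j : Fin n =>
        if (i : ℕ) = (j : ℕ) then B ((i : ℕ) + 1 + 2)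
        else if (i : ℕ) + 1 = (j : ℕ) then A ((i : ℕ) + 1 + 2)
        else if (j : ℕ) + 1 = (i : ℕ) then A ((j : ℕ) + 1 + 2)
        else 0)]
      · rw [e1 (Matrix.submatrix _ Fin.succ (Fin.succAbove 0)) (Matrix.of fun i j : Fin (n + 1) =>
          if (i : ℕ) = (j : ℕ) then B ((i : ℕ) + 1 + 1)
          else if (i : ℕ) + 1 = (j : ℕ) then A ((i : ℕ) + 1 + 1)
          else if (j : ℕ) + 1 = (i : ℕ) then A ((j : ℕ) + 1 + 1)
          else 0)]
        · simp
          ring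
        · intro i j
          simp
      · intro i j
        have : (Fin.succAbove (Fin.succ (0 : Fin (n + 1))) j.succ) = j.succ.succ := by
          rw [Fin.succ_succAbove_succ]; simp
        simp [this]
    · intro i
      simp
  · intro i _
    simp

theorem Qtri_aux {R : Type} [CommRing R] [IsDomain R] (m : ℕ) : ∀ (B A : ℕ → R),
    (Qtri (m + 2) B A = 0 ∧ Qtri (m + 1) (fun k => B (k + 1)) (fun k => A (k + 1)) = 0) ↔
      ∃ i : ℕ, 1 ≤ i ∧ i ≤ m + 1 ∧ A i = 0 ∧
        Qtri (m + 2 - i) (fun k => B (k + i)) (fun k => A (k + i)) = 0 := by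
  induction m with
  | zero =>
    intro B A
    rw [Qtri_rec]
    constructor
    · rintro ⟨h1, h2⟩
      refine ⟨1, le_rfl, le_rfl, ?_, h2⟩
      rw [h2] at h1
      simpa [Qtri] using h1
    · rintro ⟨i, h1, h2, h3, h4⟩
      obtain rfl : i = 1 := by omega
      have h4 : Qtri (0 + 1) (fun k => B (k + 1)) (fun k => A (k + 1)) = 0 := h4
      exact ⟨by rw [h4, h3]; simp, h4⟩
  | succ m ih =>
    intro B A
    have key := ih (fun k => B (k + 1)) (fun k => A (k + 1))
    rw [Qtri_rec]
    constructor
    · rintro ⟨h1, h2⟩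
      by_cases hA : A 1 = 0
      · exact ⟨1, le_rfl, by omega, hA, h2⟩
      · rw [h2] at h1
        have h3 : Qtri (m + 1) (fun k => B (k + 2)) (fun k => A (k + 2)) = 0 := by
          simpa [hA] using h1
        obtain ⟨i, a, b, c, d⟩ := key.1 ⟨h2, h3⟩
        refine ⟨i + 1, by omega, by omega, c, ?_⟩
        have e : m + 1 + 2 - (i + 1) = m + 2 - i := by omega
        rw [e]
        exact d
    · rintro ⟨i, h1, h2, h3, h4⟩
      obtain ⟨j, rfl⟩ : ∃ j, i = j + 1 := ⟨i - 1, by omega⟩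
      rcases Nat.eq_zero_or_pos j with rfl | hj
      · have h4 : Qtri (m + 1 + 1) (fun k => B (k + 1)) (fun k => A (k + 1)) = 0 := h4
        have h3 : A 1 = 0 := h3
        exact ⟨by rw [h4, h3]; simp, h4⟩
      · have e : m + 1 + 2 - (j + 1) = m + 2 - j := by omega
        rw [e] at h4
        obtain ⟨a, b⟩ := key.2 ⟨j, hj, by omega, h3, h4⟩
        have b : Qtri (m + 1) (fun k => B (k + 2)) (fun k => A (k + 2)) = 0 := b
        have a : Qtri (m + 1 + 1) (fun k => B (k + 1)) (fun k => A (k + 1)) = 0 := a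
        exact ⟨by rw [a, b]; simp, a⟩

/-- **Coordinate decomposition of `V(Q_n, Q_{n−1}(2))`** (eq. (11.54) of the paper).
Over an integral domain, for `n ≥ 2`:
`Q_n(B_1,…,B_n; A_1,…,A_{n−1}) = 0` and `Q_{n−1}(B_2,…,B_n; A_2,…,A_{n−1}) = 0` hold
simultaneously iff there is `1 ≤ i ≤ n − 1` with `A_i = 0` and
`Q_{n−i}(B_{i+1},…,B_n; A_{i+1},…,A_{n−1}) = 0`. -/
theorem qtri_intersection_decomposition {R : Type} [CommRing R] [IsDomain R]
    (n : ℕ) (hn : 2 ≤ n) (B A : ℕ → R) :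
    (Qtri n B A = 0 ∧ Qtri (n - 1) (fun k => B (k + 1)) (fun k => A (k + 1)) = 0) ↔
      ∃ i : ℕ, 1 ≤ i ∧ i ≤ n - 1 ∧ A i = 0 ∧
        Qtri (n - i) (fun k => B (k + i)) (fun k => A (k + i)) = 0 := by
  obtain ⟨m, rfl⟩ : ∃ m, n = m + 2 := ⟨n - 2, by omega⟩
  exact Qtri_aux m B A
end

section
/- Let R be an integral domain and n ≥ 2. For elements B_1,…,B_n, A_1,…,A_{n−1} of R with Q_n(B_1,…,B_n; A_1,…,A_{n−1}) = 0, the following are equivalent: (i) Q_{n−1}(B_1,…,B_{n−1}; A_1,…,A_{n−2}) = 0 or Q_{n−1}(B_2,…,B_n; A_2,…,A_{n−1}) = 0; (ii) A_1·A_2·⋯·A_{n−1} = 0. -/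
theorem Qtri_key {R : Type} [CommRing R] (n : ℕ) : ∀ (B A : ℕ → R),
    Qtri (n + 1) B A * Qtri (n + 1) (fun k => B (k + 1)) (fun k => A (k + 1))
      - Qtri (n + 2) B A * Qtri n (fun k => B (k + 1)) (fun k => A (k + 1))
      = (∏ i ∈ Finset.range (n + 1), A (i + 1)) ^ 2 := by
  induction n with
  | zero =>
    intro B A
    rw [Qtri_rec]
    simp [Qtri]
  | succ n ih =>
    intro B A
    have h := ih (fun k => B (k + 1)) (fun k => A (k + 1))
    rw [Finset.prod_range_succ', mul_pow, ← h, Qtri_rec (n + 1) B A, Qtri_rec n B A]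
    simp only [add_assoc, Nat.reduceAdd, zero_add]
    ring

/-- **`V(Q_n, Q_{n−1}(1)) ∪ V(Q_n, Q_{n−1}(2)) = V(A_1⋯A_{n−1}, Q_n)`**
(eq. (11.56) of the paper).  Over an integral domain, for `n ≥ 2`, assuming
`Q_n(B_1,…,B_n; A_1,…,A_{n−1}) = 0`, the following are equivalent:
(i) `Q_{n−1}(B_1,…,B_{n−1}; A_1,…,A_{n−2}) = 0` or
`Q_{n−1}(B_2,…,B_n; A_2,…,A_{n−1}) = 0`; (ii) `A_1·A_2·⋯·A_{n−1} = 0`. -/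
theorem qtri_union_eq_product_zero {R : Type} [CommRing R] [IsDomain R]
    (n : ℕ) (hn : 2 ≤ n) (B A : ℕ → R) (h : Qtri n B A = 0) :
    (Qtri (n - 1) B A = 0 ∨ Qtri (n - 1) (fun k => B (k + 1)) (fun k => A (k + 1)) = 0) ↔
      ∏ i ∈ Finset.Icc 1 (n - 1), A i = 0 := by
  obtain ⟨m, rfl⟩ : ∃ m, n = m + 2 := ⟨n - 2, by omega⟩
  have key := Qtri_key m B A
  have hp : ∏ i ∈ Finset.Icc 1 (m + 2 - 1), A i = ∏ i ∈ Finset.range (m + 1), A (i + 1) := by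
    rw [Finset.range_eq_Ico, Finset.prod_Ico_add' A 0 (m + 1) 1]
    rfl
  rw [hp, ← mul_eq_zero, ← pow_eq_zero_iff (a := ∏ i ∈ Finset.range (m + 1), A (i + 1)) (two_ne_zero), ← key, h]
  simp
end
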